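/- arXiv:2512.00584 — 2 statements merged into one kernel-verified Lean document; each statement's English description precedes it below -/
import Mathlib

section
/- For a finite graph Δ, the number ℓ(Δ) produced by the recursive procedure (repeatedly deleting a free vertex of the current induced subgraph and counting the number of deletions performed until no free vertex remains) does not depend on the choices of free vertices made; it equals the maximum number of collapses that can be performed starting from Δ. -/
/-- An abstract simplicial complex on the vertex set `{0, …, n}`. -/
structure SComplex (n : ℕ) where
  faces : Set (Finset (Fin (n + 1)))
  down_closed : ∀ {s t : Finset (Fin (n + 1))}, s ∈ faces → t ⊆ s → t ∈ faces

/-- A simplicial complex is a graph if it is (at most) 1-dimensional. -/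
def SComplex.IsGraph {n : ℕ} (Δ : SComplex n) : Prop :=
  ∀ s ∈ Δ.faces, s.card ≤ 2

/-- `v` is a free vertex of the subcomplex of `Δ` induced on `W`: it belongs to exactly one
edge of the induced subcomplex. -/
def FreeVertexIn {n : ℕ} (Δ : SComplex n) (W : Finset (Fin (n + 1))) (v : Fin (n + 1)) :
    Prop :=
  v ∈ W ∧ ∃! e : Finset (Fin (n + 1)), e ∈ Δ.faces ∧ e ⊆ W ∧ e.card = 2 ∧ v ∈ e

/-- `l` is a collapse sequence for `Δ` starting from the vertex subset `W`: each entry in turn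
is a free vertex of the complex induced on the remaining vertices, and is deleted. -/
def IsCollapseSeq {n : ℕ} (Δ : SComplex n) : Finset (Fin (n + 1)) → List (Fin (n + 1)) → Prop
  | _, [] => True
  | W, v :: l => FreeVertexIn Δ W v ∧ IsCollapseSeq Δ (W.erase v) l

/-- A collapse sequence is maximal (i.e. is a run of the recursive procedure) if after
performing it no free vertex remains. -/
def IsMaximalCollapseSeq {n : ℕ} (Δ : SComplex n) (W : Finset (Fin (n + 1)))
    (l : List (Fin (n + 1))) : Prop :=
  IsCollapseSeq Δ W l ∧ ∀ v, ¬ FreeVertexIn Δ (W \ l.toFinset) v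

/-! Each collapse destroys exactly one edge, so the length of a collapse sequence is the number of
edges it destroys. If an induced subgraph `T` has no free vertex, then none of its edges is ever
destroyed: the first collapsed vertex lying on an edge of `T` would lie on no other edge of `T`,
hence be free in `T`. Applied to what remains after a maximal collapse sequence, this says that no
other collapse sequence can destroy more edges. -/

section

open Finset

variable {n : ℕ} {Δ : SComplex n} {W T e : Finset (Fin (n + 1))} {v : Fin (n + 1)}
  {l m : List (Fin (n + 1))}

open Classical in
/-- The edges (two-element faces) of the subcomplex of `Δ` induced on `W`; their number is the
quantity that drops by one at each collapse. -/
noncomputable def SComplex.edgesIn (Δ : SComplex n) (W : Finset (Fin (n + 1))) :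
    Finset (Finset (Fin (n + 1))) :=
  {e ∈ W.powersetCard 2 | e ∈ Δ.faces}

namespace SComplex

theorem mem_edgesIn : e ∈ Δ.edgesIn W ↔ (e ⊆ W ∧ #e = 2) ∧ e ∈ Δ.faces := by
  simp only [edgesIn, mem_filter, mem_powersetCard]

open Classical in
theorem edgesIn_mono (h : T ⊆ W) : Δ.edgesIn T ⊆ Δ.edgesIn W :=
  filter_subset_filter _ (powersetCard_mono h)

theorem edgesIn_erase (Δ : SComplex n) (W : Finset (Fin (n + 1))) (v : Fin (n + 1)) :
    Δ.edgesIn (W.erase v) = {e ∈ Δ.edgesIn W | v ∉ e} := by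
  ext e
  simp only [mem_filter, mem_edgesIn, subset_erase]
  tauto

end SComplex

theorem freeVertexIn_iff_existsUnique :
    FreeVertexIn Δ W v ↔ ∃! e, e ∈ Δ.edgesIn W ∧ v ∈ e := by
  have edge_iff (e : Finset (Fin (n + 1))) :
      (e ∈ Δ.faces ∧ e ⊆ W ∧ #e = 2 ∧ v ∈ e) ↔ e ∈ Δ.edgesIn W ∧ v ∈ e := by
    rw [SComplex.mem_edgesIn]
    tauto
  simp only [FreeVertexIn, edge_iff, and_iff_right_iff_imp]
  rintro ⟨e, ⟨he, hve⟩, -⟩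
  exact (SComplex.mem_edgesIn.1 he).1.1 hve

theorem FreeVertexIn.card_edgesIn_erase_add_one (hv : FreeVertexIn Δ W v) :
    #(Δ.edgesIn (W.erase v)) + 1 = #(Δ.edgesIn W) := by
  have card_edges_at : #{e ∈ Δ.edgesIn W | v ∈ e} = 1 := by
    simpa only [card_eq_one_iff_existsUnique, mem_filter] using freeVertexIn_iff_existsUnique.1 hv
  rw [SComplex.edgesIn_erase, ← card_filter_add_card_filter_not (s := Δ.edgesIn W) (v ∈ ·),
    card_edges_at, add_comm]

theorem FreeVertexIn.of_edgesIn_subset (hv : FreeVertexIn Δ W v)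
    (hTW : Δ.edgesIn T ⊆ Δ.edgesIn W) (he : e ∈ Δ.edgesIn T) (hve : v ∈ e) :
    FreeVertexIn Δ T v := by
  rw [freeVertexIn_iff_existsUnique] at hv ⊢
  exact ⟨e, ⟨he, hve⟩, fun f ⟨hf, hvf⟩ => hv.unique ⟨hTW hf, hvf⟩ ⟨hTW he, hve⟩⟩

theorem sdiff_toFinset_cons {α : Type*} [DecidableEq α] (s : Finset α) (a : α) (l : List α) :
    s \ (a :: l).toFinset = s.erase a \ l.toFinset := by
  rw [List.toFinset_cons, sdiff_insert, erase_sdiff_comm]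

namespace IsCollapseSeq

theorem length_add_card_edgesIn_sdiff (hl : IsCollapseSeq Δ W l) :
    l.length + #(Δ.edgesIn (W \ l.toFinset)) = #(Δ.edgesIn W) := by
  induction l generalizing W with
  | nil => simp
  | cons v l ih =>
    obtain ⟨hv, hl⟩ := hl
    rw [sdiff_toFinset_cons, List.length_cons, add_right_comm, ih hl,
      hv.card_edgesIn_erase_add_one]

theorem edgesIn_subset_sdiff (hl : IsCollapseSeq Δ W l) (hT : ∀ v, ¬ FreeVertexIn Δ T v)
    (hTW : Δ.edgesIn T ⊆ Δ.edgesIn W) : Δ.edgesIn T ⊆ Δ.edgesIn (W \ l.toFinset) := by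
  induction l generalizing W with
  | nil => simpa using hTW
  | cons v l ih =>
    obtain ⟨hv, hl⟩ := hl
    rw [sdiff_toFinset_cons]
    refine ih hl fun e he => ?_
    have hve : v ∉ e := fun hve => hT v (hv.of_edgesIn_subset hTW he hve)
    rw [SComplex.edgesIn_erase]
    exact mem_filter.2 ⟨hTW he, hve⟩

theorem length_le_of_isMaximalCollapseSeq (hl : IsCollapseSeq Δ W l)
    (hm : IsMaximalCollapseSeq Δ W m) : l.length ≤ m.length := by
  obtain ⟨hm, no_free⟩ := hm
  have remaining_le : #(Δ.edgesIn (W \ m.toFinset)) ≤ #(Δ.edgesIn (W \ l.toFinset)) :=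
    card_le_card (hl.edgesIn_subset_sdiff no_free (SComplex.edgesIn_mono sdiff_subset))
  have count_l := hl.length_add_card_edgesIn_sdiff
  have count_m := hm.length_add_card_edgesIn_sdiff
  lia

end IsCollapseSeq

theorem collapse_length_welldefined_general {l₁ l₂ : List (Fin (n + 1))}
    (h₁ : IsMaximalCollapseSeq Δ W l₁) (h₂ : IsMaximalCollapseSeq Δ W l₂) :
    l₁.length = l₂.length ∧ ∀ l, IsCollapseSeq Δ W l → l.length ≤ l₁.length :=
  ⟨le_antisymm (h₁.1.length_le_of_isMaximalCollapseSeq h₂)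
    (h₂.1.length_le_of_isMaximalCollapseSeq h₁),
    fun _ hl => hl.length_le_of_isMaximalCollapseSeq h₁⟩

end

/-- **Statement 11.** For a finite graph `Δ`, the number `ℓ(Δ)` produced by the recursive
procedure (repeatedly deleting a free vertex until none remains) does not depend on the choice
of free vertices: any two maximal collapse sequences have the same length, and this common
length is the maximum number of collapses that can be performed starting from `Δ`. -/
theorem collapse_length_welldefined {n : ℕ} (Δ : SComplex n) (hΔ : Δ.IsGraph)
    (l₁ l₂ : List (Fin (n + 1)))
    (h₁ : IsMaximalCollapseSeq Δ Finset.univ l₁)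
    (h₂ : IsMaximalCollapseSeq Δ Finset.univ l₂) :
    l₁.length = l₂.length ∧
      ∀ l : List (Fin (n + 1)), IsCollapseSeq Δ Finset.univ l → l.length ≤ l₁.length := by
  exact collapse_length_welldefined_general h₁ h₂
end

section
/- Let Δ be a connected graph on the vertex set {0,…,n}. Then ℓ(Δ) ≤ n, and ℓ(Δ) = n if and only if Δ is a tree. Moreover, if Δ is connected and not a tree, then the sets A(Δ) and W(Δ) produced by the recursive procedure do not depend on the choices of free vertices made. -/
/-- The simple graph underlying a 1-dimensional simplicial complex on `{0, …, n}`: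
`i` and `j` are adjacent iff `{i, j}` is an edge of the complex. -/
def SComplex.graph {n : ℕ} (Δ : SComplex n) : SimpleGraph (Fin (n + 1)) :=
  SimpleGraph.fromRel fun i j => ({i, j} : Finset (Fin (n + 1))) ∈ Δ.faces

/-!
Connectedness survives the deletion of a free vertex, so a run on a connected graph never deletes
every vertex, and it stops either at a single vertex or at a set inducing minimum degree at least
two. In the other direction, a vertex set inducing minimum degree at least two never loses a vertex
to the procedure. Applied to the support of a cycle, this shows that only a tree can shrink to a
single vertex; and a tree does, because a nontrivial tree has a leaf. Applied to the remaining set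
of another run, it shows that if the graph is not a tree then every run stops at the largest set
inducing minimum degree at least two (the 2-core), whatever the choices.
-/

section Pruning

variable {V : Type*} {G : SimpleGraph V} {W C : Finset V} {v : V}

/-- The vertex `v` is a leaf of the subgraph of `G` induced on `W`; the graph-theoretic form of
`FreeVertexIn`. -/
def IsLeafIn (G : SimpleGraph V) (W : Finset V) (v : V) : Prop :=
  v ∈ W ∧ ∃! u, u ∈ W ∧ G.Adj v u

/-- The subgraph of `G` induced on `C` has minimum degree at least two, phrased without
degrees so that no finiteness or decidability is needed. -/
def InducesMinDegreeTwo (G : SimpleGraph V) (C : Finset V) : Prop :=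
  ∀ v ∈ C, (G.neighborSet v ∩ C).Nontrivial

theorem InducesMinDegreeTwo.not_isLeafIn (hC : InducesMinDegreeTwo G C)
    (hCW : C ⊆ W) (hv : v ∈ C) : ¬ IsLeafIn G W v := by
  rintro ⟨-, hunique⟩
  obtain ⟨a, ⟨hva, haC⟩, b, ⟨hvb, hbC⟩, hab⟩ := hC v hv
  exact hab (hunique.unique ⟨hCW haC, hva⟩ ⟨hCW hbC, hvb⟩)

theorem InducesMinDegreeTwo.one_lt_card (hC : InducesMinDegreeTwo G C)
    (hne : C.Nonempty) : 1 < C.card := by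
  obtain ⟨v, hv⟩ := hne
  obtain ⟨u, hvu, huC⟩ := (hC v hv).nonempty
  exact Finset.one_lt_card.mpr ⟨v, hv, u, huC, hvu.ne⟩

theorem inducesMinDegreeTwo_of_forall_not_isLeafIn
    (hconn : (G.induce (W : Set V)).Connected) (hcard : 1 < W.card)
    (hleaf : ∀ v, ¬ IsLeafIn G W v) : InducesMinDegreeTwo G W := by
  intro v hv
  have : Nontrivial (W : Set V) := (Finset.one_lt_card_iff_nontrivial.mp hcard).coe_sort
  obtain ⟨⟨u, hu⟩, hvu⟩ := hconn.preconnected.exists_adj_of_nontrivial ⟨v, hv⟩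
  by_contra hsub
  refine hleaf v ⟨hv, u, ⟨hu, hvu⟩, fun w hw => ?_⟩
  exact Set.not_nontrivial_iff.mp hsub ⟨hw.2, hw.1⟩ ⟨hvu, hu⟩

theorem exists_isLeafIn_of_isTree (htree : (G.induce (W : Set V)).IsTree)
    (hcard : 1 < W.card) : ∃ v, IsLeafIn G W v := by
  classical
  have : Nontrivial (W : Set V) := (Finset.one_lt_card_iff_nontrivial.mp hcard).coe_sort
  obtain ⟨⟨v, hv⟩, hdeg⟩ := htree.exists_vert_degree_one_of_nontrivial
  obtain ⟨⟨u, hu⟩, hvu, hunique⟩ := SimpleGraph.degree_eq_one_iff_existsUnique_adj.mp hdeg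
  exact ⟨v, hv, u, ⟨hu, hvu⟩, fun w hw => congrArg Subtype.val (hunique ⟨w, hw.1⟩ hw.2)⟩

theorem inducesMinDegreeTwo_support_of_isCycle [DecidableEq V] {p : G.Walk v v}
    (hp : p.IsCycle) : InducesMinDegreeTwo G p.support.toFinset := by
  intro u hu
  have hcard : (p.toSubgraph.neighborSet u).ncard = 2 :=
    hp.ncard_neighborSet_toSubgraph_eq_two (List.mem_toFinset.mp hu)
  have hsub : p.toSubgraph.neighborSet u ⊆ G.neighborSet u ∩ p.support.toFinset := fun w hw =>
    ⟨hw.adj_sub, List.mem_toFinset.mpr (p.mem_verts_toSubgraph.mp hw.snd_mem)⟩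
  exact (Set.one_lt_ncard_iff_nontrivial_and_finite.mp (by omega)).1.mono hsub

theorem exists_inducesMinDegreeTwo_of_not_isAcyclic
    (hcyc : ¬ (G.induce (W : Set V)).IsAcyclic) :
    ∃ C ⊆ W, C.Nonempty ∧ InducesMinDegreeTwo G C := by
  classical
  simp only [SimpleGraph.IsAcyclic, not_forall, not_not] at hcyc
  obtain ⟨v, p, hp⟩ := hcyc
  let q := p.map (SimpleGraph.Embedding.induce (W : Set V)).toHom
  have hq : q.IsCycle := hp.map Subtype.val_injective
  refine ⟨q.support.toFinset, fun x hx => ?_, ⟨v, List.mem_toFinset.mpr q.start_mem_support⟩,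
    inducesMinDegreeTwo_support_of_isCycle hq⟩
  obtain ⟨y, -, rfl⟩ := List.mem_map.mp (SimpleGraph.Walk.support_map _ p ▸ List.mem_toFinset.mp hx)
  exact y.2

variable [DecidableEq V]

theorem IsLeafIn.connected_induce_erase (hv : IsLeafIn G W v)
    (hconn : (G.induce (W : Set V)).Connected) :
    (G.induce (W.erase v : Set V)).Connected := by
  obtain ⟨-, u, ⟨huW, hvu⟩, hunique⟩ := hv
  have hpre : ((G.induce (W : Set V)).induce {x | x.1 ≠ v}).Preconnected := by
    refine hconn.preconnected.induce_of_degree_eq_one fun x hx a ha b hb => Subtype.ext ?_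
    obtain rfl : x.1 = v := not_not.mp hx
    exact (hunique a ⟨a.2, ha⟩).trans (hunique b ⟨b.2, hb⟩).symm
  let f : (G.induce (W : Set V)).induce {x | x.1 ≠ v} →g G.induce (W.erase v : Set V) :=
    ⟨fun x => ⟨x.1.1, Finset.mem_coe.mpr (Finset.mem_erase.mpr ⟨x.2, x.1.2⟩)⟩, id⟩
  have hf : Function.Surjective f := fun ⟨x, hx⟩ =>
    ⟨⟨⟨x, Finset.mem_of_mem_erase hx⟩, Finset.ne_of_mem_erase hx⟩, rfl⟩
  have : Nonempty (W.erase v : Set V) := ⟨u, by simp [hvu.ne', huW]⟩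
  exact ⟨hpre.map f hf⟩

/-- The list `l` successively deletes leaves, starting from the subgraph of `G` induced on the
given vertex set; the graph-theoretic form of `IsCollapseSeq`. -/
def IsPruningSeq (G : SimpleGraph V) : Finset V → List V → Prop
  | _, [] => True
  | W, v :: l => IsLeafIn G W v ∧ IsPruningSeq G (W.erase v) l

/-- A pruning sequence after which no leaf remains; the graph-theoretic form of
`IsMaximalCollapseSeq`. -/
def IsMaximalPruningSeq (G : SimpleGraph V) (W : Finset V) (l : List V) : Prop :=
  IsPruningSeq G W l ∧ ∀ v, ¬ IsLeafIn G (W \ l.toFinset) v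

theorem sdiff_toFinset_cons_s9 (W : Finset V) (v : V) (l : List V) :
    W \ (v :: l).toFinset = W.erase v \ l.toFinset := by
  rw [List.toFinset_cons, Finset.sdiff_insert, Finset.erase_sdiff_comm]

variable {l : List V}

theorem IsPruningSeq.toFinset_subset (h : IsPruningSeq G W l) : l.toFinset ⊆ W := by
  induction l generalizing W with
  | nil => simp
  | cons v l ih =>
    rw [List.toFinset_cons]
    exact Finset.insert_subset h.1.1 ((ih h.2).trans (Finset.erase_subset v W))

theorem IsPruningSeq.card_sdiff_add_length (h : IsPruningSeq G W l) :
    (W \ l.toFinset).card + l.length = W.card := by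
  induction l generalizing W with
  | nil => simp
  | cons v l ih =>
    rw [sdiff_toFinset_cons_s9, List.length_cons, ← add_assoc, ih h.2,
      Finset.card_erase_add_one h.1.1]

theorem IsPruningSeq.connected_induce_sdiff (h : IsPruningSeq G W l)
    (hconn : (G.induce (W : Set V)).Connected) :
    (G.induce (W \ l.toFinset : Finset V)).Connected := by
  induction l generalizing W with
  | nil => rwa [List.toFinset_nil, Finset.sdiff_empty]
  | cons v l ih =>
    rw [sdiff_toFinset_cons_s9]
    exact ih h.2 (h.1.connected_induce_erase hconn)

theorem IsPruningSeq.subset_sdiff (h : IsPruningSeq G W l) (hC : InducesMinDegreeTwo G C)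
    (hCW : C ⊆ W) : C ⊆ W \ l.toFinset := by
  induction l generalizing W with
  | nil => simpa using hCW
  | cons v l ih =>
    rw [sdiff_toFinset_cons_s9]
    have hvC : v ∉ C := fun hv => hC.not_isLeafIn hCW hv h.1
    exact ih h.2 (Finset.subset_erase.mpr ⟨hCW, hvC⟩)

theorem IsPruningSeq.card_sdiff_pos (h : IsPruningSeq G W l)
    (hconn : (G.induce (W : Set V)).Connected) : 0 < (W \ l.toFinset).card := by
  obtain ⟨v, hv⟩ := (h.connected_induce_sdiff hconn).nonempty
  exact Finset.card_pos.mpr ⟨v, hv⟩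

theorem IsMaximalPruningSeq.card_sdiff_eq_one_iff_isTree (h : IsMaximalPruningSeq G W l)
    (hconn : (G.induce (W : Set V)).Connected) :
    (W \ l.toFinset).card = 1 ↔ (G.induce (W : Set V)).IsTree := by
  refine ⟨fun hcard => ⟨hconn, ?_⟩, fun htree => ?_⟩
  · by_contra hcyc
    obtain ⟨C, hCW, hne, hC⟩ := exists_inducesMinDegreeTwo_of_not_isAcyclic hcyc
    exact (hC.one_lt_card hne).not_ge (hcard ▸ Finset.card_le_card (h.1.subset_sdiff hC hCW))
  · have hsub : ((W \ l.toFinset : Finset V) : Set V) ⊆ W := Finset.sdiff_subset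
    have htree' : (G.induce (W \ l.toFinset : Finset V)).IsTree :=
      ⟨h.1.connected_induce_sdiff hconn,
        htree.isAcyclic.comap (G.induceHomOfLE hsub).toHom (G.induceHomOfLE hsub).injective⟩
    by_contra hcard
    have hpos := h.1.card_sdiff_pos hconn
    obtain ⟨v, hv⟩ := exists_isLeafIn_of_isTree htree' (by omega)
    exact h.2 v hv

theorem IsMaximalPruningSeq.isGreatest_sdiff (h : IsMaximalPruningSeq G W l)
    (hconn : (G.induce (W : Set V)).Connected) (hnt : ¬ (G.induce (W : Set V)).IsTree) :
    IsGreatest {C | C ⊆ W ∧ InducesMinDegreeTwo G C} (W \ l.toFinset) := by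
  refine ⟨⟨Finset.sdiff_subset, ?_⟩, fun C hC => h.1.subset_sdiff hC.2 hC.1⟩
  have hpos := h.1.card_sdiff_pos hconn
  have hne := (h.card_sdiff_eq_one_iff_isTree hconn).not.mpr hnt
  exact inducesMinDegreeTwo_of_forall_not_isLeafIn (h.1.connected_induce_sdiff hconn)
    (by omega) h.2

theorem collapse_length_le_and_tree_iff_general (h : IsMaximalPruningSeq G W l)
    (hconn : (G.induce (W : Set V)).Connected) :
    l.length < W.card ∧
      (l.length + 1 = W.card ↔ (G.induce (W : Set V)).IsTree) ∧
      (¬ (G.induce (W : Set V)).IsTree → ∀ l' : List V, IsMaximalPruningSeq G W l' →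
        l'.toFinset = l.toFinset ∧ W \ l'.toFinset = W \ l.toFinset) := by
  have hcard := h.1.card_sdiff_add_length
  have hpos := h.1.card_sdiff_pos hconn
  refine ⟨by omega, ?_, fun hnt l' h' => ?_⟩
  · rw [← h.card_sdiff_eq_one_iff_isTree hconn]
    omega
  · have hrest : W \ l'.toFinset = W \ l.toFinset :=
      (h'.isGreatest_sdiff hconn hnt).unique (h.isGreatest_sdiff hconn hnt)
    refine ⟨?_, hrest⟩
    rw [← Finset.sdiff_sdiff_eq_self h'.1.toFinset_subset, hrest,
      Finset.sdiff_sdiff_eq_self h.1.toFinset_subset]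

end Pruning

section SimplicialComplex

variable {n : ℕ} {Δ : SComplex n} {W : Finset (Fin (n + 1))}

theorem SComplex.graph_adj {i j : Fin (n + 1)} :
    Δ.graph.Adj i j ↔ i ≠ j ∧ ({i, j} : Finset (Fin (n + 1))) ∈ Δ.faces := by
  simp [SComplex.graph, SimpleGraph.fromRel_adj, Finset.pair_comm j i]

theorem SComplex.edge_containing_iff_exists_adj {v : Fin (n + 1)} (hv : v ∈ W)
    {e : Finset (Fin (n + 1))} :
    e ∈ Δ.faces ∧ e ⊆ W ∧ e.card = 2 ∧ v ∈ e ↔ ∃ u, (u ∈ W ∧ Δ.graph.Adj v u) ∧ {v, u} = e := by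
  constructor
  · rintro ⟨he, heW, hcard, hve⟩
    obtain ⟨u, hu⟩ := Finset.card_eq_one.mp
      (by rw [Finset.card_erase_of_mem hve, hcard] : (e.erase v).card = 1)
    obtain ⟨huv, hue⟩ := Finset.mem_erase.mp (hu ▸ Finset.mem_singleton_self u)
    have hpair : {v, u} = e := by rw [← Finset.insert_erase hve, hu]
    exact ⟨u, ⟨heW hue, graph_adj.mpr ⟨huv.symm, hpair ▸ he⟩⟩, hpair⟩
  · rintro ⟨u, ⟨huW, hadj⟩, rfl⟩
    obtain ⟨hvu, hface⟩ := graph_adj.mp hadj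
    exact ⟨hface, Finset.insert_subset hv (Finset.singleton_subset_iff.mpr huW),
      Finset.card_pair hvu, Finset.mem_insert_self v _⟩

theorem freeVertexIn_iff_isLeafIn {v : Fin (n + 1)} :
    FreeVertexIn Δ W v ↔ IsLeafIn Δ.graph W v := by
  refine and_congr_right fun hv => ?_
  simp only [SComplex.edge_containing_iff_exists_adj hv]
  constructor
  · rintro ⟨-, ⟨u, hu, rfl⟩, hunique⟩
    refine ⟨u, hu, fun w hw => ?_⟩
    have hmem : w ∈ ({v, u} : Finset _) := hunique {v, w} ⟨w, hw, rfl⟩ ▸ by simp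
    simpa [hw.2.ne'] using hmem
  · rintro ⟨u, hu, hunique⟩
    refine ⟨{v, u}, ⟨u, hu, rfl⟩, ?_⟩
    rintro _ ⟨w, hw, rfl⟩
    rw [hunique w hw]

theorem isCollapseSeq_iff_isPruningSeq {l : List (Fin (n + 1))} :
    IsCollapseSeq Δ W l ↔ IsPruningSeq Δ.graph W l := by
  induction l generalizing W with
  | nil => exact Iff.rfl
  | cons v l ih => exact and_congr freeVertexIn_iff_isLeafIn ih

theorem isMaximalCollapseSeq_iff_isMaximalPruningSeq {l : List (Fin (n + 1))} :
    IsMaximalCollapseSeq Δ W l ↔ IsMaximalPruningSeq Δ.graph W l :=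
  and_congr isCollapseSeq_iff_isPruningSeq
    (forall_congr' fun _ => freeVertexIn_iff_isLeafIn.not)

end SimplicialComplex

/-- **Statement 12.** For a connected graph `Δ` on `{0, …, n}`: `ℓ(Δ) ≤ n`, with equality iff
`Δ` is a tree; moreover if `Δ` is not a tree then the sets `A(Δ)` (deleted vertices) and
`W(Δ)` (remaining vertices) do not depend on the choices of free vertices. -/
theorem collapse_length_le_and_tree_iff {n : ℕ} (Δ : SComplex n) (hΔ : Δ.IsGraph)
    (hvert : ∀ i : Fin (n + 1), ({i} : Finset (Fin (n + 1))) ∈ Δ.faces)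
    (hconn : Δ.graph.Connected)
    (l : List (Fin (n + 1))) (hl : IsMaximalCollapseSeq Δ Finset.univ l) :
    l.length ≤ n ∧
      (l.length = n ↔ Δ.graph.IsTree) ∧
      (¬ Δ.graph.IsTree → ∀ l' : List (Fin (n + 1)), IsMaximalCollapseSeq Δ Finset.univ l' →
        l'.toFinset = l.toFinset ∧ Finset.univ \ l'.toFinset = Finset.univ \ l.toFinset) := by
  have huniv : Δ.graph.induce (Finset.univ : Finset (Fin (n + 1))) ≃g Δ.graph := by
    rw [Finset.coe_univ]
    exact Δ.graph.induceUnivIso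
  simpa [isMaximalCollapseSeq_iff_isMaximalPruningSeq, huniv.isTree_iff, Nat.lt_succ_iff] using
    collapse_length_le_and_tree_iff_general
      (isMaximalCollapseSeq_iff_isMaximalPruningSeq.mp hl) (huniv.connected_iff.mpr hconn)
end
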